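/- Fix integers n ≥ 1 and k ≥ 1. For every x ∈ ⋃_{m≥1} Ω_m(k) (that is, every point of the support of w_k), one has M(w_k)(x) ≤ 9^n · w_k(x). -/

import Mathlib

open MeasureTheory Set ENNReal

noncomputable section

/-- The half-open axis-parallel cube with corner `a` and side length `l`. -/
def Cube (n : ℕ) (a : Fin n → ℝ) (l : ℝ) : Set (Fin n → ℝ) :=
  Set.univ.pi fun i => Set.Ico (a i) (a i + l)

/-- The uncentered Hardy–Littlewood maximal function over axis-parallel cubes:
`Mg(x) = sup_{Q ∋ x} |Q|⁻¹ ∫_Q g`. -/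
def MaxFn {n : ℕ} (g : (Fin n → ℝ) → ℝ≥0∞) (x : Fin n → ℝ) : ℝ≥0∞ :=
  ⨆ (a : Fin n → ℝ) (l : ℝ) (_ : 0 < l) (_ : x ∈ Cube n a l),
    (volume (Cube n a l))⁻¹ * ∫⁻ y in Cube n a l, g y

/-- The cube of the sparse family `S` with parameters `k, N`:
`[0, 2^{-N})^n` for `k = 0` and `[2^k, 2^k + 2^{-N})^n` for `k ≥ 1`. -/
def sCube (n k N : ℕ) : Set (Fin n → ℝ) :=
  Cube n (fun _ => if k = 0 then 0 else (2:ℝ)^k) ((2:ℝ)^(-(N:ℤ)))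

/-- The sparse operator `T_S g = Σ_{Q ∈ S} (|Q|⁻¹ ∫_Q g) 1_Q`. -/
def TS {n : ℕ} (g : (Fin n → ℝ) → ℝ≥0∞) (x : Fin n → ℝ) : ℝ≥0∞ :=
  ∑' q : ℕ × ℕ,
    (sCube n q.1 q.2).indicator
      (fun _ => (volume (sCube n q.1 q.2))⁻¹ * ∫⁻ y in sCube n q.1 q.2, g y) x

/-- The `j`-th digit (for `j ≥ 1`) of `t ∈ [0,1)` in base `2^k`, using the expansion
which is not eventually constant `2^k - 1`. -/
def digit (k j : ℕ) (t : ℝ) : ℤ := ⌊t * 2^(k*j)⌋ % 2^k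

/-- `Ω_m(k) ⊆ [0,1)^n`: the points all of whose coordinates have base-`2^k` digits
in `{0, …, 2^{k-1}-1}` for `1 ≤ j ≤ m-1`, with `m`-th digit equal to `2^{k-1}`. -/
def Omega (n k m : ℕ) : Set (Fin n → ℝ) :=
  {x | (∀ i, x i ∈ Set.Ico (0:ℝ) 1) ∧
    ∀ i, (∀ j, 1 ≤ j → j < m → digit k j (x i) < 2^(k-1)) ∧
      digit k m (x i) = 2^(k-1)}

/-- The weight `w_k = Σ_{m ≥ 1} (2^{kn}/(2^{(k-1)n}+1))^m 1_{Ω_m(k)}`. -/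
def wk (n k : ℕ) : (Fin n → ℝ) → ℝ≥0∞ := fun x =>
  ∑' m : ℕ,
    (Omega n k (m+1)).indicator
      (fun _ => ((2:ℝ≥0∞)^(k*n) / ((2:ℝ≥0∞)^((k-1)*n) + 1))^(m+1)) x

/-- `Q_1^m(k) = [2^{-k(m-1)-1}, 2^{-k(m-1)-1} + 2^{-km})^n`. -/
def Q1 (n k m : ℕ) : Set (Fin n → ℝ) :=
  Cube n (fun _ => (2:ℝ)^(-(k*(m-1) : ℤ) - 1)) ((2:ℝ)^(-(k*m : ℤ)))

/-- `Γ(k) = ⋃_{m ≥ 3} Q_1^m(k)`. -/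
def Gamma (n k : ℕ) : Set (Fin n → ℝ) := ⋃ m : ℕ, Q1 n k (m+3)

/-- `A_k = 2^{(k-1)n} (2^{(k-1)n}+1)^2`. -/
def Ak (n k : ℕ) : ℝ≥0∞ := 2^((k-1)*n) * (2^((k-1)*n) + 1)^2

/-- The weight `w(x) = Σ_{k ≥ 3} A_k w_k(x - 2⃗^k) 1_{Γ(k)}(x - 2⃗^k)`. -/
def bigW (n : ℕ) : (Fin n → ℝ) → ℝ≥0∞ := fun x =>
  ∑' k : ℕ,
    (Gamma n (k+3)).indicator (fun z => Ak n (k+3) * wk n (k+3) z)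
      (fun i => x i - (2:ℝ)^(k+3))

/-- The test function `f(x) = Σ_{k ≥ 3} k^{-ε} A_k w_k(x - 2⃗^k)`. -/
def bigF (n : ℕ) (ε : ℝ) : (Fin n → ℝ) → ℝ≥0∞ := fun x =>
  ∑' k : ℕ,
    ((k+3 : ℝ≥0∞) ^ (-ε)) * Ak n (k+3) * wk n (k+3) (fun i => x i - (2:ℝ)^(k+3))

/-- `T` is bounded from `L^p(v)` to `L^p(u)` (for nonnegative functions, which are
required to be supported in `supp v`): there is a finite constant `C` with
`‖Tf‖_{L^p(u)} ≤ C ‖f‖_{L^p(v)}` for all `f ∈ L^p(v)`. -/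
def BddOn {n : ℕ} (T : ((Fin n → ℝ) → ℝ≥0∞) → (Fin n → ℝ) → ℝ≥0∞)
    (p : ℝ) (v u : (Fin n → ℝ) → ℝ≥0∞) : Prop :=
  ∃ C : ℝ≥0∞, C ≠ ∞ ∧ ∀ f : (Fin n → ℝ) → ℝ≥0∞, Measurable f →
    (∀ x, v x = 0 → f x = 0) → (∫⁻ x, f x ^ p * v x) < ∞ →
    ∫⁻ x, T f x ^ p * u x ≤ C ^ p * ∫⁻ x, f x ^ p * v x

/-- The dual weight `u^{1-p'} 1_{supp u}`. -/
def dualW {n : ℕ} (u : (Fin n → ℝ) → ℝ≥0∞) (q : ℝ) : (Fin n → ℝ) → ℝ≥0∞ :=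
  fun x => if u x = 0 then 0 else u x ^ (1 - q)

/-! Write `λ` for the ratio of the weight, so that `w_k = λ^m` on `Ω_m(k)`. On each grid interval
the next base-`2^k` digit is uniformly distributed, so among the points of a grid cube of side
`2^{-km}` whose first `m` digits are low, the proportion lying in `Ω_{m+i+1}(k)` is at most
`(2^{-k} 2^{-i})^n`, and the resulting series sums to `λ^m`. At all other points `w_k ≤ λ^m`, so the
average of `w_k` over any union of grid cubes of that side is at most `λ^m`.

Let `Q` be a cube of side `l` through `x ∈ Ω_m(k)`. If `l > 2^{-km}/2`, rounding `Q` outwards to the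
grid of mesh `2^{-km}` multiplies each side by at most `5`, and the average bound applies. If
`l ≤ 2^{-km}/2`, then `Q` meets no `Ω_j(k)` with `j ≥ m + 2`, because such a set stays at distance
more than `2^{-km}/2` from `Ω_m(k)`; hence `w_k ≤ λ^{m+1} ≤ 2^n λ^m` on `Q`. -/

section Grid

/-- For `b > 0`, the σ-algebra on `ℝ` generated by the grid intervals `[c/b, (c+1)/b)`, `c ∈ ℤ`.
Its measurable sets are the unions of grid intervals. -/
abbrev gridAlgebra (b : ℝ) : MeasurableSpace ℝ :=
  MeasurableSpace.comap (fun t : ℝ => ⌊t * b⌋) ⊤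

lemma measurable_floor_mul (b : ℝ) : Measurable fun t : ℝ => ⌊t * b⌋ :=
  Int.measurable_floor.comp (measurable_id.mul_const b)

lemma gridAlgebra_le (b : ℝ) : gridAlgebra b ≤ Real.measurableSpace :=
  (measurable_floor_mul b).comap_le

lemma floor_mul_eq_ediv (t b : ℝ) {d : ℕ} (hd : d ≠ 0) : ⌊t * b⌋ = ⌊t * (b * d)⌋ / (d : ℤ) := by
  have hd' : (d : ℝ) ≠ 0 := Nat.cast_ne_zero.2 hd
  rw [← Int.floor_div_natCast, ← mul_assoc, mul_div_cancel_right₀ _ hd']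

lemma gridAlgebra_le_mul_natCast (b : ℝ) {d : ℕ} (hd : d ≠ 0) :
    gridAlgebra b ≤ gridAlgebra (b * d) := by
  rintro _ ⟨J, -, rfl⟩
  refine ⟨(· / (d : ℤ)) ⁻¹' J, trivial, ?_⟩
  ext t
  simp only [mem_preimage, floor_mul_eq_ediv t b hd]

lemma gridAlgebra_two_pow_mono {M N : ℕ} (h : M ≤ N) :
    gridAlgebra (2 ^ M) ≤ gridAlgebra (2 ^ N) := by
  obtain ⟨d, rfl⟩ := Nat.exists_eq_add_of_le h
  simpa [pow_add] using gridAlgebra_le_mul_natCast (2 ^ M) (pow_ne_zero d two_ne_zero)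

lemma measurableSet_gridAlgebra_Ico {b : ℝ} (hb : 0 < b) (p q : ℤ) :
    MeasurableSet[gridAlgebra b] (Ico (p / b) (q / b)) := by
  refine ⟨Ico p q, trivial, ?_⟩
  ext t
  simp only [mem_preimage, mem_Ico, Int.le_floor, Int.floor_lt, div_le_iff₀ hb, lt_div_iff₀ hb]

lemma volume_floor_mul_preimage_singleton {b : ℝ} (hb : 0 < b) (c : ℤ) :
    volume ((fun t : ℝ => ⌊t * b⌋) ⁻¹' {c}) = ENNReal.ofReal b⁻¹ := by
  have hcell : (fun t : ℝ => ⌊t * b⌋) ⁻¹' {c} = Ico (c / b) ((c + 1) / b) := by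
    ext t
    simp only [mem_preimage, mem_singleton_iff, Int.floor_eq_iff, mem_Ico, div_le_iff₀ hb,
      lt_div_iff₀ hb]
  rw [hcell, Real.volume_Ico, ← sub_div, add_sub_cancel_left, one_div]

lemma volume_floor_mul_preimage_inter_fract_le {b : ℝ} (hb : 0 < b) (c : ℤ) (U : Set ℝ) :
    volume ((fun t : ℝ => ⌊t * b⌋) ⁻¹' {c} ∩ {t | Int.fract (t * b) ∈ U}) ≤
      ENNReal.ofReal b⁻¹ * volume U := by
  have hsub : (fun t : ℝ => ⌊t * b⌋) ⁻¹' {c} ∩ {t | Int.fract (t * b) ∈ U} ⊆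
      (· * b) ⁻¹' ((· + (-c : ℝ)) ⁻¹' U) := by
    rintro t ⟨rfl, ht⟩
    exact ht
  calc _ ≤ volume ((· * b) ⁻¹' ((· + (-c : ℝ)) ⁻¹' U)) := measure_mono hsub
    _ = ENNReal.ofReal b⁻¹ * volume U := by
      rw [Real.volume_preimage_mul_right hb.ne', measure_preimage_add_right,
        abs_of_pos (inv_pos.2 hb)]

lemma volume_inter_fract_le {b : ℝ} (hb : 0 < b) {S : Set ℝ} (hS : MeasurableSet[gridAlgebra b] S)
    (U : Set ℝ) : volume (S ∩ {t | Int.fract (t * b) ∈ U}) ≤ volume U * volume S := by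
  obtain ⟨J, -, rfl⟩ := hS
  have hcell (c : ℤ) : MeasurableSet ((fun t : ℝ => ⌊t * b⌋) ⁻¹' {c}) :=
    measurable_floor_mul b (measurableSet_singleton c)
  rw [← Measure.restrict_apply (measurable_floor_mul b trivial),
    ← tsum_measure_preimage_singleton J.to_countable fun c _ => hcell c,
    ← tsum_measure_preimage_singleton J.to_countable fun c _ => hcell c, ← ENNReal.tsum_mul_left]
  refine ENNReal.tsum_le_tsum fun c => ?_
  rw [Measure.restrict_apply (hcell c), volume_floor_mul_preimage_singleton hb, mul_comm]
  exact volume_floor_mul_preimage_inter_fract_le hb c U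

end Grid

section Digits

variable {k j m : ℕ} {t : ℝ}

lemma floor_mul_two_pow_succ (k j : ℕ) (t : ℝ) :
    ⌊t * 2 ^ (k * (j + 1))⌋ = ⌊t * 2 ^ (k * j)⌋ * 2 ^ k + digit k (j + 1) t := by
  have hdiv := floor_mul_eq_ediv t (2 ^ (k * j)) (pow_ne_zero k two_ne_zero)
  push_cast at hdiv
  rw [← pow_add, ← Nat.mul_succ] at hdiv
  rw [hdiv, digit, Int.ediv_mul_add_emod]

lemma digit_nonneg (k j : ℕ) (t : ℝ) : 0 ≤ digit k j t :=
  Int.emod_nonneg _ (by positivity)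

lemma digit_succ (k j : ℕ) (t : ℝ) :
    digit k (j + 1) t = ⌊Int.fract (t * 2 ^ (k * j)) * 2 ^ k⌋ := by
  have hsplit : Int.fract (t * 2 ^ (k * j)) * 2 ^ k =
      t * 2 ^ (k * (j + 1)) - (⌊t * 2 ^ (k * j)⌋ * 2 ^ k : ℤ) := by
    rw [Int.fract]
    push_cast
    ring
  rw [hsplit, Int.floor_sub_intCast, floor_mul_two_pow_succ, add_sub_cancel_left]

lemma digit_succ_lt_iff {d : ℤ} :
    digit k (j + 1) t < d ↔ Int.fract (t * 2 ^ (k * j)) < d / 2 ^ k := by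
  rw [digit_succ, Int.floor_lt, lt_div_iff₀ (by positivity)]

lemma digit_succ_eq_iff {d : ℤ} :
    digit k (j + 1) t = d ↔
      Int.fract (t * 2 ^ (k * j)) ∈ Ico ((d : ℝ) / 2 ^ k) ((d + 1) / 2 ^ k) := by
  rw [digit_succ, Int.floor_eq_iff, mem_Ico, div_le_iff₀ (by positivity),
    lt_div_iff₀ (by positivity)]

lemma measurable_digit_gridAlgebra {i : ℕ} (hij : i ≤ j) :
    Measurable[gridAlgebra (2 ^ (k * j))] (digit k i) := by
  have hfloor : Measurable[gridAlgebra (2 ^ (k * i))] fun t : ℝ => ⌊t * 2 ^ (k * i)⌋ :=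
    comap_measurable _
  have hdigit : Measurable[gridAlgebra (2 ^ (k * i))] (digit k i) :=
    (measurable_from_top (f := fun z : ℤ => z % 2 ^ k)).comp hfloor
  exact hdigit.mono (gridAlgebra_two_pow_mono (Nat.mul_le_mul_left k hij)) le_rfl

/-- The points of `[0,1)` whose first `j` digits in base `2^k` lie in the lower half
`{0, …, 2^{k-1}-1}`. -/
def lowDigits (k j : ℕ) : Set ℝ :=
  {t | t ∈ Ico (0 : ℝ) 1 ∧ ∀ i, 1 ≤ i → i ≤ j → digit k i t < 2 ^ (k - 1)}

/-- The one-dimensional factor of `Omega n k (j + 1)`: the first `j` digits lie in the lower half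
and the next one is `2^{k-1}`. -/
def omegaCoord (k j : ℕ) : Set ℝ := lowDigits k j ∩ {t | digit k (j + 1) t = 2 ^ (k - 1)}

lemma lowDigits_anti {i : ℕ} (hij : i ≤ j) : lowDigits k j ⊆ lowDigits k i :=
  fun _ ht => ⟨ht.1, fun a ha hai => ht.2 a ha (hai.trans hij)⟩

lemma mem_lowDigits_iff_of_mem_omegaCoord (ht : t ∈ omegaCoord k j) :
    t ∈ lowDigits k m ↔ m ≤ j := by
  refine ⟨fun hlow => ?_, fun hmj => lowDigits_anti hmj ht.1⟩
  by_contra! hjm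
  exact (hlow.2 (j + 1) j.succ_pos hjm).ne ht.2

lemma measurableSet_gridAlgebra_lowDigits (k j : ℕ) :
    MeasurableSet[gridAlgebra (2 ^ (k * j))] (lowDigits k j) := by
  have hunit : MeasurableSet[gridAlgebra (2 ^ (k * j))] (Ico (0 : ℝ) 1) := by
    refine gridAlgebra_two_pow_mono (Nat.zero_le _) _ ?_
    rw [pow_zero]
    simpa only [Int.cast_zero, Int.cast_one, div_one] using
      measurableSet_gridAlgebra_Ico one_pos 0 1
  have heq : lowDigits k j =
      Ico 0 1 ∩ ⋂ i ∈ {i | 1 ≤ i ∧ i ≤ j}, digit k i ⁻¹' Iio (2 ^ (k - 1)) := by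
    ext t
    simp [lowDigits]
  rw [heq]
  exact hunit.inter <| MeasurableSet.biInter (to_countable _) fun i hi =>
    measurable_digit_gridAlgebra hi.2 measurableSet_Iio

lemma measurableSet_omegaCoord (k j : ℕ) : MeasurableSet (omegaCoord k j) := by
  have hdigit : Measurable (digit k (j + 1)) :=
    (measurable_digit_gridAlgebra le_rfl).mono (gridAlgebra_le _) le_rfl
  exact (gridAlgebra_le _ _ (measurableSet_gridAlgebra_lowDigits k j)).inter
    (hdigit (measurableSet_singleton _))

lemma fract_lt_half_of_mem_lowDigits (hk : 1 ≤ k) (ht : t ∈ lowDigits k (j + 1)) :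
    Int.fract (t * 2 ^ (k * j)) < 1 / 2 := by
  have hlt := ht.2 (j + 1) j.succ_pos le_rfl
  rw [digit_succ_lt_iff] at hlt
  obtain ⟨k, rfl⟩ := Nat.exists_eq_add_of_le' hk
  convert hlt using 1
  rw [Nat.add_sub_cancel, pow_succ]
  push_cast
  field_simp

lemma volume_inter_lowDigits_le (hk : 1 ≤ k) {S : Set ℝ}
    (hS : MeasurableSet[gridAlgebra (2 ^ (k * m))] S) (i : ℕ) :
    volume (S ∩ lowDigits k (m + i)) ≤ 2⁻¹ ^ i * volume S := by
  induction i with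
  | zero => simpa using measure_mono inter_subset_left
  | succ i ih =>
    have hgrid : MeasurableSet[gridAlgebra (2 ^ (k * (m + i)))] (S ∩ lowDigits k (m + i)) :=
      (gridAlgebra_two_pow_mono (by gcongr; omega) _ hS).inter
        (measurableSet_gridAlgebra_lowDigits _ _)
    have hsub : S ∩ lowDigits k (m + (i + 1)) ⊆
        S ∩ lowDigits k (m + i) ∩ {t | Int.fract (t * 2 ^ (k * (m + i))) ∈ Ico 0 (1 / 2)} :=
      fun t ht => ⟨⟨ht.1, lowDigits_anti (by omega) ht.2⟩, Int.fract_nonneg _,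
        fract_lt_half_of_mem_lowDigits hk ht.2⟩
    calc volume (S ∩ lowDigits k (m + (i + 1)))
        ≤ volume (Ico (0 : ℝ) (1 / 2)) * volume (S ∩ lowDigits k (m + i)) :=
          (measure_mono hsub).trans (volume_inter_fract_le (by positivity) hgrid _)
      _ = 2⁻¹ * volume (S ∩ lowDigits k (m + i)) := by
          rw [Real.volume_Ico, sub_zero, one_div, ENNReal.ofReal_inv_of_pos two_pos,
            ENNReal.ofReal_ofNat]
      _ ≤ 2⁻¹ * (2⁻¹ ^ i * volume S) := by gcongr
      _ = 2⁻¹ ^ (i + 1) * volume S := by ring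

lemma volume_inter_omegaCoord_le (hk : 1 ≤ k) {S : Set ℝ}
    (hS : MeasurableSet[gridAlgebra (2 ^ (k * m))] S) (i : ℕ) :
    volume (S ∩ omegaCoord k (m + i)) ≤ (2 ^ k)⁻¹ * 2⁻¹ ^ i * volume S := by
  set I : Set ℝ := Ico (((2 ^ (k - 1) : ℤ) : ℝ) / 2 ^ k) (((2 ^ (k - 1) : ℤ) + 1) / 2 ^ k) with hI
  have hvolI : volume I = (2 ^ k)⁻¹ := by
    rw [hI, Real.volume_Ico, ← sub_div, add_sub_cancel_left, one_div,
      ENNReal.ofReal_inv_of_pos (by positivity), ENNReal.ofReal_pow zero_le_two,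
      ENNReal.ofReal_ofNat]
  have hgrid : MeasurableSet[gridAlgebra (2 ^ (k * (m + i)))] (S ∩ lowDigits k (m + i)) :=
    (gridAlgebra_two_pow_mono (by gcongr; omega) _ hS).inter
      (measurableSet_gridAlgebra_lowDigits _ _)
  have hsub : S ∩ omegaCoord k (m + i) ⊆
      S ∩ lowDigits k (m + i) ∩ {t | Int.fract (t * 2 ^ (k * (m + i))) ∈ I} :=
    fun t ht => ⟨⟨ht.1, ht.2.1⟩, digit_succ_eq_iff.1 ht.2.2⟩
  calc volume (S ∩ omegaCoord k (m + i))
      ≤ volume I * volume (S ∩ lowDigits k (m + i)) :=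
        (measure_mono hsub).trans (volume_inter_fract_le (by positivity) hgrid _)
    _ ≤ (2 ^ k)⁻¹ * (2⁻¹ ^ i * volume S) := by
        rw [hvolI]
        gcongr
        exact volume_inter_lowDigits_le hk hS i
    _ = (2 ^ k)⁻¹ * 2⁻¹ ^ i * volume S := (mul_assoc _ _ _).symm

end Digits

section Separation

variable {k m : ℕ} {s t : ℝ}

lemma floor_eq_zero_of_mem_lowDigits_one (ht : t ∈ lowDigits 1 m) : ⌊t * 2 ^ (1 * m)⌋ = 0 := by
  induction m with
  | zero => simpa [Int.floor_eq_zero_iff] using ht.1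
  | succ m ih =>
    have hlt : digit 1 (m + 1) t < 1 := ht.2 (m + 1) m.succ_pos le_rfl
    have hnonneg := digit_nonneg 1 (m + 1) t
    rw [floor_mul_two_pow_succ, ih (lowDigits_anti m.le_succ ht)]
    omega

lemma floor_add_two_le_floor (hk : 1 ≤ k) (hs : s ∈ omegaCoord k m) (ht : t ∈ lowDigits k (m + 1))
    (hst : ⌊s * 2 ^ (k * (m + 1))⌋ ≤ ⌊t * 2 ^ (k * (m + 1))⌋) :
    ⌊s * 2 ^ (k * (m + 1))⌋ + 2 ≤ ⌊t * 2 ^ (k * (m + 1))⌋ := by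
  have hsd : digit k (m + 1) s = 2 ^ (k - 1) := hs.2
  have htd := ht.2 (m + 1) m.succ_pos le_rfl
  have htd0 := digit_nonneg k (m + 1) t
  rw [floor_mul_two_pow_succ, floor_mul_two_pow_succ, hsd] at hst ⊢
  have hlt : ⌊s * 2 ^ (k * m)⌋ < ⌊t * 2 ^ (k * m)⌋ := by
    refine lt_of_mul_lt_mul_right (a := (2 : ℤ) ^ k) ?_ (by positivity)
    linarith
  obtain rfl | hk2 := hk.eq_or_lt
  · rw [floor_eq_zero_of_mem_lowDigits_one hs.1,
      floor_eq_zero_of_mem_lowDigits_one (lowDigits_anti m.le_succ ht)] at hlt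
    exact absurd hlt (lt_irrefl 0)
  · have hpow : (2 : ℤ) ^ k = 2 * 2 ^ (k - 1) := (mul_pow_sub_one (by omega) 2).symm
    have hhalf : (2 : ℤ) ≤ 2 ^ (k - 1) := le_self_pow₀ one_le_two (by omega)
    have hmul := mul_le_mul_of_nonneg_right (Int.add_one_le_iff.2 hlt) (pow_nonneg zero_le_two k)
    linarith

lemma half_lt_abs_sub_mul (hk : 1 ≤ k) (hs : s ∈ omegaCoord k m) (ht : t ∈ lowDigits k (m + 2)) :
    1 / 2 < |s - t| * 2 ^ (k * (m + 1)) := by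
  have hfract : Int.fract (t * 2 ^ (k * (m + 1))) < 1 / 2 := fract_lt_half_of_mem_lowDigits hk ht
  have hs_ge := Int.floor_le (s * 2 ^ (k * (m + 1)))
  have hs_lt := Int.lt_floor_add_one (s * 2 ^ (k * (m + 1)))
  have ht_ge := Int.floor_le (t * 2 ^ (k * (m + 1)))
  have ht_eq := Int.floor_add_fract (t * 2 ^ (k * (m + 1)))
  rw [← abs_of_pos (show (0 : ℝ) < 2 ^ (k * (m + 1)) by positivity), ← abs_mul, sub_mul, lt_abs]
  obtain hlt | hle := lt_or_ge ⌊t * 2 ^ (k * (m + 1))⌋ ⌊s * 2 ^ (k * (m + 1))⌋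
  · left
    have hgap : (⌊t * 2 ^ (k * (m + 1))⌋ : ℝ) + 1 ≤ ⌊s * 2 ^ (k * (m + 1))⌋ := by
      exact_mod_cast hlt
    linarith
  · right
    have hgap : (⌊s * 2 ^ (k * (m + 1))⌋ : ℝ) + 2 ≤ ⌊t * 2 ^ (k * (m + 1))⌋ := by
      exact_mod_cast floor_add_two_le_floor hk hs (lowDigits_anti (m + 1).le_succ ht) hle
    linarith

end Separation

section Weight

variable {n k j m : ℕ} {x : Fin n → ℝ}

/-- The ratio `2^{kn}/(2^{(k-1)n}+1)` of the values of `wk n k` on consecutive sets `Omega`. -/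
def wkRatio (n k : ℕ) : ℝ≥0∞ := (2 : ℝ≥0∞) ^ (k * n) / ((2 : ℝ≥0∞) ^ ((k - 1) * n) + 1)

lemma two_pow_mul_eq (n : ℕ) (hk : 1 ≤ k) : (2 : ℝ≥0∞) ^ (k * n) = 2 ^ ((k - 1) * n) * 2 ^ n := by
  rw [← pow_add, ← Nat.succ_mul, Nat.succ_eq_add_one, Nat.sub_add_cancel hk]

lemma one_le_wkRatio (hn : 1 ≤ n) (hk : 1 ≤ k) : 1 ≤ wkRatio n k := by
  rw [wkRatio, ENNReal.le_div_iff_mul_le (.inl (by simp)) (.inl (by finiteness)), one_mul,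
    two_pow_mul_eq n hk]
  calc (2 : ℝ≥0∞) ^ ((k - 1) * n) + 1
      ≤ 2 ^ ((k - 1) * n) + 2 ^ ((k - 1) * n) := by gcongr; exact one_le_pow₀ one_le_two
    _ = 2 ^ ((k - 1) * n) * 2 ^ 1 := by ring
    _ ≤ 2 ^ ((k - 1) * n) * 2 ^ n := by gcongr; exact one_le_two

lemma wkRatio_le_two_pow (n : ℕ) (hk : 1 ≤ k) : wkRatio n k ≤ 2 ^ n := by
  refine ENNReal.div_le_of_le_mul ?_
  rw [two_pow_mul_eq n hk, mul_comm]
  gcongr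
  exact le_self_add

lemma wkRatio_mul_inv_two_pow_pow (n k : ℕ) :
    wkRatio n k * ((2 ^ k)⁻¹) ^ n = (2 ^ ((k - 1) * n) + 1)⁻¹ := by
  rw [wkRatio, div_eq_mul_inv, mul_right_comm, ← ENNReal.inv_pow, ← pow_mul,
    ENNReal.mul_inv_cancel (by positivity) (by finiteness), one_mul]

lemma wkRatio_mul_inv_two_pow (n : ℕ) (hk : 1 ≤ k) :
    wkRatio n k * 2⁻¹ ^ n = 1 - (2 ^ ((k - 1) * n) + 1)⁻¹ := by
  set p : ℝ≥0∞ := 2 ^ ((k - 1) * n)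
  have hsum : p * (p + 1)⁻¹ + (p + 1)⁻¹ = 1 := by
    rw [← add_one_mul, ENNReal.mul_inv_cancel (by simp) (by finiteness)]
  have hprod : wkRatio n k * 2⁻¹ ^ n = p * (p + 1)⁻¹ := by
    rw [wkRatio, two_pow_mul_eq n hk, div_eq_mul_inv, mul_right_comm, mul_assoc p,
      ← ENNReal.inv_pow, ENNReal.mul_inv_cancel (by positivity) (by finiteness), mul_one]
  rw [hprod]
  exact ENNReal.eq_sub_of_add_eq (by simp) hsum

-- The ratio is chosen so that this series, with `q = (2^{(k-1)n}+1)⁻¹`, is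
-- `wkRatio n k ^ m * ∑ i, q * (1 - q) ^ i`.
lemma tsum_wkRatio_pow_mul (n m : ℕ) (hk : 1 ≤ k) :
    ∑' i : ℕ, wkRatio n k ^ (m + i + 1) * ((2 ^ k)⁻¹ * 2⁻¹ ^ i) ^ n = wkRatio n k ^ m := by
  set q : ℝ≥0∞ := (2 ^ ((k - 1) * n) + 1)⁻¹ with hq
  have hq0 : q ≠ 0 := ENNReal.inv_ne_zero.2 (by finiteness)
  have hq1 : q ≤ 1 := ENNReal.inv_le_one.2 le_add_self
  have hterm (i : ℕ) : wkRatio n k ^ (m + i + 1) * ((2 ^ k)⁻¹ * 2⁻¹ ^ i) ^ n =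
      wkRatio n k ^ m * q * (1 - q) ^ i := by
    rw [hq, ← wkRatio_mul_inv_two_pow n hk, ← wkRatio_mul_inv_two_pow_pow]
    ring
  simp_rw [hterm]
  rw [ENNReal.tsum_mul_left, ENNReal.tsum_geometric, ENNReal.sub_sub_cancel one_ne_top hq1,
    mul_assoc, ENNReal.mul_inv_cancel hq0 (hq1.trans_lt one_lt_top).ne, mul_one]

lemma Omega_succ_eq_pi (n k j : ℕ) : Omega n k (j + 1) = univ.pi fun _ => omegaCoord k j := by
  ext x
  simp only [Omega, omegaCoord, lowDigits, mem_ofPred_eq, mem_pi, mem_univ, true_implies,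
    mem_inter_iff, Nat.lt_succ_iff, and_assoc, forall_and]

lemma measurableSet_Omega_succ (n k j : ℕ) : MeasurableSet (Omega n k (j + 1)) := by
  rw [Omega_succ_eq_pi]
  exact .univ_pi fun _ => measurableSet_omegaCoord k j

lemma mem_pi_lowDigits_iff_of_mem_Omega (hn : 1 ≤ n) (hx : x ∈ Omega n k (j + 1)) :
    x ∈ univ.pi (fun _ => lowDigits k m) ↔ m ≤ j := by
  rw [Omega_succ_eq_pi] at hx
  refine ⟨fun h => ?_, fun hmj i _ => lowDigits_anti hmj (hx i trivial).1⟩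
  exact (mem_lowDigits_iff_of_mem_omegaCoord (hx ⟨0, hn⟩ trivial)).1 (h ⟨0, hn⟩ trivial)

lemma Omega_succ_index_le (hn : 1 ≤ n) {i : ℕ} (hi : x ∈ Omega n k (i + 1))
    (hj : x ∈ Omega n k (j + 1)) : i ≤ j :=
  (mem_pi_lowDigits_iff_of_mem_Omega hn hj).1 ((mem_pi_lowDigits_iff_of_mem_Omega hn hi).2 le_rfl)

lemma wk_eq_wkRatio_pow (hn : 1 ≤ n) (hx : x ∈ Omega n k (j + 1)) :
    wk n k x = wkRatio n k ^ (j + 1) := by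
  rw [wk, tsum_eq_single j fun i hij => indicator_of_notMem (fun hi => hij <|
    (Omega_succ_index_le hn hi hx).antisymm (Omega_succ_index_le hn hx hi)) _,
    indicator_of_mem hx, wkRatio]

lemma wk_le_of_notMem_lowDigits (hn : 1 ≤ n) (hk : 1 ≤ k)
    (hx : x ∉ univ.pi fun _ => lowDigits k m) : wk n k x ≤ wkRatio n k ^ m := by
  by_cases hsupp : ∃ j, x ∈ Omega n k (j + 1)
  · obtain ⟨j, hj⟩ := hsupp
    rw [mem_pi_lowDigits_iff_of_mem_Omega hn hj, not_le] at hx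
    rw [wk_eq_wkRatio_pow hn hj]
    exact pow_le_pow_right₀ (one_le_wkRatio hn hk) hx
  · push Not at hsupp
    simp [wk, hsupp]

lemma wk_eq_tsum_of_mem_lowDigits (hn : 1 ≤ n) (hx : x ∈ univ.pi fun _ => lowDigits k m) :
    wk n k x =
      ∑' i, (Omega n k (m + i + 1)).indicator (fun _ => wkRatio n k ^ (m + i + 1)) x := by
  have hzero : ∀ j ∈ Finset.range m,
      (Omega n k (j + 1)).indicator (fun _ => wkRatio n k ^ (j + 1)) x = 0 := fun j hj =>
    indicator_of_notMem (fun hxj => (Finset.mem_range.1 hj).not_ge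
      ((mem_pi_lowDigits_iff_of_mem_Omega hn hxj).1 hx)) _
  change ∑' j, (Omega n k (j + 1)).indicator (fun _ => wkRatio n k ^ (j + 1)) x = _
  rw [← ENNReal.summable.sum_add_tsum_nat_add' (k := m), Finset.sum_eq_zero hzero, zero_add]
  simp only [add_comm _ m]

end Weight

section Averages

variable {n k m : ℕ} {T : Fin n → Set ℝ}

lemma measurableSet_pi_of_gridAlgebra {b : ℝ} (hT : ∀ i, MeasurableSet[gridAlgebra b] (T i)) :
    MeasurableSet (univ.pi T) :=
  .univ_pi fun i => gridAlgebra_le _ _ (hT i)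

lemma volume_Omega_inter_pi_le (hk : 1 ≤ k)
    (hT : ∀ i, MeasurableSet[gridAlgebra (2 ^ (k * m))] (T i)) (i : ℕ) :
    volume (Omega n k (m + i + 1) ∩ univ.pi T) ≤
      ((2 ^ k)⁻¹ * 2⁻¹ ^ i) ^ n * volume (univ.pi T) := by
  rw [Omega_succ_eq_pi, ← pi_inter_distrib, volume_pi_pi, volume_pi_pi]
  calc ∏ l, volume (omegaCoord k (m + i) ∩ T l)
      ≤ ∏ l : Fin n, (2 ^ k)⁻¹ * 2⁻¹ ^ i * volume (T l) :=
        Finset.prod_le_prod' fun l _ => by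
          rw [inter_comm]
          exact volume_inter_omegaCoord_le hk (hT l) i
    _ = ((2 ^ k)⁻¹ * 2⁻¹ ^ i) ^ n * ∏ l, volume (T l) := by
        rw [Finset.prod_mul_distrib, Finset.prod_const, Finset.card_univ, Fintype.card_fin]

lemma lintegral_wk_le_of_subset_lowDigits (hn : 1 ≤ n) (hk : 1 ≤ k)
    (hT : ∀ i, MeasurableSet[gridAlgebra (2 ^ (k * m))] (T i)) (hlow : ∀ i, T i ⊆ lowDigits k m) :
    ∫⁻ y in univ.pi T, wk n k y ≤ wkRatio n k ^ m * volume (univ.pi T) := by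
  calc ∫⁻ y in univ.pi T, wk n k y
      = ∫⁻ y in univ.pi T, ∑' i,
          (Omega n k (m + i + 1)).indicator (fun _ => wkRatio n k ^ (m + i + 1)) y :=
        setLIntegral_congr_fun (measurableSet_pi_of_gridAlgebra hT) fun y hy =>
          wk_eq_tsum_of_mem_lowDigits hn fun i hi => hlow i (hy i hi)
    _ = ∑' i, wkRatio n k ^ (m + i + 1) * volume (Omega n k (m + i + 1) ∩ univ.pi T) := by
        rw [lintegral_tsum fun i =>
          (measurable_const.indicator (measurableSet_Omega_succ n k (m + i))).aemeasurable]
        simp only [lintegral_indicator_const, Measure.restrict_apply, measurableSet_Omega_succ]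
    _ ≤ ∑' i, wkRatio n k ^ (m + i + 1) * ((2 ^ k)⁻¹ * 2⁻¹ ^ i) ^ n * volume (univ.pi T) := by
        refine ENNReal.tsum_le_tsum fun i => ?_
        rw [mul_assoc]
        gcongr
        exact volume_Omega_inter_pi_le hk hT i
    _ = wkRatio n k ^ m * volume (univ.pi T) := by
        rw [ENNReal.tsum_mul_right, tsum_wkRatio_pow_mul n m hk]

lemma lintegral_wk_le (hn : 1 ≤ n) (hk : 1 ≤ k)
    (hT : ∀ i, MeasurableSet[gridAlgebra (2 ^ (k * m))] (T i)) :
    ∫⁻ y in univ.pi T, wk n k y ≤ wkRatio n k ^ m * volume (univ.pi T) := by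
  set B : Set (Fin n → ℝ) := univ.pi fun _ => lowDigits k m
  have hB : MeasurableSet B :=
    measurableSet_pi_of_gridAlgebra fun _ => measurableSet_gridAlgebra_lowDigits k m
  have hinter : ∫⁻ y in univ.pi T ∩ B, wk n k y ≤ wkRatio n k ^ m * volume (univ.pi T ∩ B) := by
    rw [← pi_inter_distrib]
    exact lintegral_wk_le_of_subset_lowDigits hn hk
      (fun i => (hT i).inter (measurableSet_gridAlgebra_lowDigits k m)) fun _ => inter_subset_right
  have hdiff : ∫⁻ y in univ.pi T \ B, wk n k y ≤ wkRatio n k ^ m * volume (univ.pi T \ B) := by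
    rw [← setLIntegral_const]
    exact setLIntegral_mono' ((measurableSet_pi_of_gridAlgebra hT).diff hB) fun y hy =>
      wk_le_of_notMem_lowDigits hn hk hy.2
  rw [← lintegral_inter_add_sdiff _ _ hB, ← measure_inter_add_sdiff (univ.pi T) hB, mul_add]
  exact add_le_add hinter hdiff

end Averages

section Cubes

variable {n k m : ℕ} {a x : Fin n → ℝ} {l : ℝ}

lemma measurableSet_Cube (n : ℕ) (a : Fin n → ℝ) (l : ℝ) : MeasurableSet (Cube n a l) :=
  .univ_pi fun _ => measurableSet_Ico

lemma volume_Cube (n : ℕ) (a : Fin n → ℝ) (l : ℝ) :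
    volume (Cube n a l) = ENNReal.ofReal l ^ n := by
  simp [Cube, volume_pi_pi]

lemma abs_sub_lt_of_mem_Cube {y : Fin n → ℝ} (hx : x ∈ Cube n a l) (hy : y ∈ Cube n a l)
    (i : Fin n) : |x i - y i| < l := by
  obtain ⟨hxa, hxl⟩ := hx i trivial
  obtain ⟨hya, hyl⟩ := hy i trivial
  rw [abs_sub_lt_iff]
  constructor <;> linarith

lemma notMem_lowDigits_of_mem_small_Cube (hn : 1 ≤ n) (hk : 1 ≤ k) (hx : x ∈ Omega n k (m + 1))
    (hxQ : x ∈ Cube n a l) (hl : l * 2 ^ (k * (m + 1)) ≤ 1 / 2) {y : Fin n → ℝ}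
    (hy : y ∈ Cube n a l) : y ∉ univ.pi fun _ => lowDigits k (m + 2) := by
  intro hlow
  rw [Omega_succ_eq_pi] at hx
  have hsep := half_lt_abs_sub_mul hk (hx ⟨0, hn⟩ trivial) (hlow ⟨0, hn⟩ trivial)
  have hclose : |x ⟨0, hn⟩ - y ⟨0, hn⟩| * 2 ^ (k * (m + 1)) ≤ l * 2 ^ (k * (m + 1)) := by
    gcongr
    exact (abs_sub_lt_of_mem_Cube hxQ hy _).le
  exact hsep.not_ge (hclose.trans hl)

lemma lintegral_wk_small_Cube_le (hn : 1 ≤ n) (hk : 1 ≤ k) (hx : x ∈ Omega n k (m + 1))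
    (hxQ : x ∈ Cube n a l) (hl : l * 2 ^ (k * (m + 1)) ≤ 1 / 2) :
    ∫⁻ y in Cube n a l, wk n k y ≤ 2 ^ n * wk n k x * volume (Cube n a l) :=
  calc ∫⁻ y in Cube n a l, wk n k y
      ≤ ∫⁻ _ in Cube n a l, wkRatio n k ^ (m + 2) :=
        setLIntegral_mono' (measurableSet_Cube n a l) fun _ hy =>
          wk_le_of_notMem_lowDigits hn hk (notMem_lowDigits_of_mem_small_Cube hn hk hx hxQ hl hy)
    _ = wkRatio n k * wk n k x * volume (Cube n a l) := by
        rw [setLIntegral_const, wk_eq_wkRatio_pow hn hx]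
        ring
    _ ≤ 2 ^ n * wk n k x * volume (Cube n a l) := by
        gcongr
        exact wkRatio_le_two_pow n hk

/-- For `b > 0`, the smallest half-open interval with endpoints in `b⁻¹ℤ` containing `[α, β)`, used
to round a cube outwards to the grid. -/
def gridHull (b α β : ℝ) : Set ℝ := Ico (⌊α * b⌋ / b) (⌈β * b⌉ / b)

lemma Ico_subset_gridHull {b : ℝ} (hb : 0 < b) (α β : ℝ) : Ico α β ⊆ gridHull b α β :=
  Ico_subset_Ico ((div_le_iff₀ hb).2 (Int.floor_le _)) ((le_div_iff₀ hb).2 (Int.le_ceil _))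

lemma volume_gridHull_le {b : ℝ} (hb : 0 < b) (α β : ℝ) :
    volume (gridHull b α β) ≤ ENNReal.ofReal (β - α + 2 / b) := by
  rw [gridHull, Real.volume_Ico]
  refine ENNReal.ofReal_le_ofReal ?_
  rw [← sub_div, div_le_iff₀ hb, add_mul, div_mul_cancel₀ _ hb.ne', sub_mul]
  linarith [Int.ceil_lt_add_one (β * b), Int.lt_floor_add_one (α * b)]

lemma volume_pi_gridHull_le {b : ℝ} (hb : 0 < b) (hl : 1 / 2 < l * b) :
    volume (univ.pi fun i => gridHull b (a i) (a i + l)) ≤ 5 ^ n * volume (Cube n a l) := by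
  have hside : l + 2 / b ≤ 5 * l := by
    rw [← le_sub_iff_add_le', div_le_iff₀ hb]
    linarith
  have hcoord (i : Fin n) : volume (gridHull b (a i) (a i + l)) ≤ 5 * ENNReal.ofReal l := by
    refine (volume_gridHull_le hb _ _).trans ?_
    rw [add_sub_cancel_left, ← ENNReal.ofReal_ofNat 5, ← ENNReal.ofReal_mul (by norm_num)]
    exact ENNReal.ofReal_le_ofReal hside
  rw [volume_pi_pi, volume_Cube, ← mul_pow]
  exact (Finset.prod_le_pow_card _ _ _ fun i _ => hcoord i).trans_eq (by simp)

lemma lintegral_wk_large_Cube_le (hn : 1 ≤ n) (hk : 1 ≤ k) (hl : 1 / 2 < l * 2 ^ (k * m)) :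
    ∫⁻ y in Cube n a l, wk n k y ≤ 5 ^ n * wkRatio n k ^ m * volume (Cube n a l) := by
  have hb : (0 : ℝ) < 2 ^ (k * m) := by positivity
  calc ∫⁻ y in Cube n a l, wk n k y
      ≤ ∫⁻ y in univ.pi fun i => gridHull (2 ^ (k * m)) (a i) (a i + l), wk n k y :=
        lintegral_mono_set (pi_mono fun i _ => Ico_subset_gridHull hb _ _)
    _ ≤ wkRatio n k ^ m * volume (univ.pi fun i => gridHull (2 ^ (k * m)) (a i) (a i + l)) :=
        lintegral_wk_le hn hk fun i => measurableSet_gridAlgebra_Ico hb _ _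
    _ ≤ wkRatio n k ^ m * (5 ^ n * volume (Cube n a l)) := by
        gcongr
        exact volume_pi_gridHull_le hb hl
    _ = 5 ^ n * wkRatio n k ^ m * volume (Cube n a l) := by ring

lemma MaxFn_le_of_forall_lintegral_le {g : (Fin n → ℝ) → ℝ≥0∞} {C : ℝ≥0∞}
    (h : ∀ a l, 0 < l → x ∈ Cube n a l → ∫⁻ y in Cube n a l, g y ≤ C * volume (Cube n a l)) :
    MaxFn g x ≤ C := by
  refine iSup₂_le fun a l => iSup₂_le fun hl hx => ?_
  rw [mul_comm, ← div_eq_mul_inv]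
  exact ENNReal.div_le_of_le_mul (h a l hl hx)

theorem maximal_wk_pointwise_bound_general (hn : 1 ≤ n) (hk : 1 ≤ k)
    (hx : x ∈ ⋃ m : ℕ, Omega n k (m + 1)) : MaxFn (wk n k) x ≤ 5 ^ n * wk n k x := by
  obtain ⟨m, hm⟩ := mem_iUnion.1 hx
  refine MaxFn_le_of_forall_lintegral_le fun a l _ hxQ => ?_
  obtain hsmall | hlarge := le_or_gt (l * 2 ^ (k * (m + 1))) (1 / 2)
  · refine (lintegral_wk_small_Cube_le hn hk hm hxQ hsmall).trans ?_
    gcongr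
    norm_num
  · rw [wk_eq_wkRatio_pow hn hm]
    exact lintegral_wk_large_Cube_le hn hk hlarge

end Cubes

/-- For `n ≥ 1`, `k ≥ 1` and every `x` in the support
`⋃_{m ≥ 1} Ω_m(k)` of `w_k`, one has `M(w_k)(x) ≤ 9^n · w_k(x)`. -/
theorem maximal_wk_pointwise_bound (n k : ℕ) (hn : 1 ≤ n) (hk : 1 ≤ k)
    (x : Fin n → ℝ) (hx : x ∈ ⋃ m : ℕ, Omega n k (m+1)) :
    MaxFn (wk n k) x ≤ 9^n * wk n k x := by
  refine (maximal_wk_pointwise_bound_general hn hk hx).trans ?_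
  gcongr
  norm_num
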